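/- State transition from (S2): if the pair of SpaceSaving states on neighboring streams is in state (S2) at time t−1 (with t−1 ≥ i and t ≤ T), then after processing the common update x_t the pair is in state (S1), (S2), or (S3) at time t. -/

import Mathlib

/-!
When the tracked set is full, an update `x` acts on one slot: `x` itself if it is tracked, the
eviction victim otherwise. The item in the slot is replaced by `x` and its counter is incremented.
In (S2) the tracked sets are `I ∪ {z}` and `I ∪ {z'}`, and the outcome is governed by the two
slots:

* `z` and `z'` lead to (S1);
* `z` and an item of `I` lead to (S3), and this happens only for `x = z`;
* `y ∈ I` and `z'` lead to (S2) if `C[y] = C'[z']` and to (S3) if `C[y] = C'[z'] + 1`;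
* two items of `I` coincide, and lead to (S2).

The coincidence in the last case rests on the tie-breaking rule: an item tracked on both sides whose
recencies differ has not been updated since position `i`, so its counters differ by one. Hence items
with equal counters on both sides are compared by the same recencies.
-/

/-- State of the SpaceSaving algorithm: tracked set, counters (0 for untracked
items), and recency (last occurrence time, 0 if never seen). -/
structure SSState (α : Type) where
  tracked : Finset α
  count : α → ℕ
  recency : α → ℕ

variable {α : Type} [LinearOrder α]

/-- The set of tracked items of minimum counter value. -/
def ssMinSet (s : SSState α) : Finset α :=
  s.tracked.filter (fun a => ∀ b ∈ s.tracked, s.count a ≤ s.count b)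

/-- The eviction victim: among tracked items of minimum counter value, the one
with the largest recency (ties in recency broken by the order on `α`). -/
def ssEvict (s : SSState α) : Option α :=
  if h : ((ssMinSet s).filter (fun a => ∀ b ∈ ssMinSet s, s.recency b ≤ s.recency a)).Nonempty
  then some (((ssMinSet s).filter (fun a => ∀ b ∈ ssMinSet s, s.recency b ≤ s.recency a)).max' h)
  else none

/-- One step of SpaceSaving with capacity `k` at time `t`; a `none` update
contributes nothing. -/
def ssStep (k t : ℕ) (s : SSState α) : Option α → SSState α
  | none => s
  | some x =>
    if x ∈ s.tracked then
      ⟨s.tracked, Function.update s.count x (s.count x + 1), Function.update s.recency x t⟩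
    else if s.tracked.card < k then
      ⟨insert x s.tracked, Function.update s.count x 1, Function.update s.recency x t⟩
    else
      match ssEvict s with
      | none => s
      | some y =>
        ⟨insert x (s.tracked.erase y),
         Function.update (Function.update s.count y 0) x (s.count y + 1),
         Function.update s.recency x t⟩

def ssRunAux (k : ℕ) : SSState α → ℕ → List (Option α) → SSState α
  | s, _, [] => s
  | s, t, x :: xs => ssRunAux k (ssStep k t s x) (t + 1) xs

/-- Run SpaceSaving with capacity `k` on a stream (positions are 1-indexed). -/
def ssRun (k : ℕ) (X : List (Option α)) : SSState α :=
  ssRunAux k ⟨∅, fun _ => 0, fun _ => 0⟩ 1 X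

section NeighborStates

variable {α : Type} [LinearOrder α]

/-- State (S1) of the pair of SpaceSaving data structures on neighboring streams:
(a) the tracked sets coincide; (b) there is `y ∈ T` with `C[y] = C'[y] + 1`;
(c) all other tracked counters coincide. -/
def StateS1 (s s' : SSState α) : Prop :=
  s.tracked = s'.tracked ∧
  ∃ y ∈ s.tracked, s.count y = s'.count y + 1 ∧
    ∀ z ∈ s.tracked, z ≠ y → s.count z = s'.count z

/-- State (S2): (a) `T ≠ T'` with `T \ T' = {z}` and `T' \ T = {z'}`;
(b) counters agree on `T ∩ T'`; (c) `C[z] = C'[z'] + 1`, `z'` attains the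
minimum counter in `T'`, and `C[z] ≤ min_{a ∈ T} C[a] + 1`. -/
def StateS2 (s s' : SSState α) : Prop :=
  s.tracked ≠ s'.tracked ∧
  ∃ z z' : α,
    s.tracked \ s'.tracked = {z} ∧ s'.tracked \ s.tracked = {z'} ∧
    (∀ a ∈ s.tracked ∩ s'.tracked, s.count a = s'.count a) ∧
    s.count z = s'.count z' + 1 ∧
    (∀ a ∈ s'.tracked, s'.count z' ≤ s'.count a) ∧
    (∀ a ∈ s.tracked, s.count z ≤ s.count a + 1)

/-- State (S3): (a) `T ≠ T'` with `T \ T' = {z}` and `T' \ T = {z'}`;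
(b) there is `y ∈ T ∩ T'` with `C[y] = C'[y] + 1` and the counters agree on the
rest of the intersection; (c) `C[z] = C'[z']` and both attain the minimum
counter value of their respective tracked sets. -/
def StateS3 (s s' : SSState α) : Prop :=
  s.tracked ≠ s'.tracked ∧
  ∃ z z' : α,
    s.tracked \ s'.tracked = {z} ∧ s'.tracked \ s.tracked = {z'} ∧
    (∃ y ∈ s.tracked ∩ s'.tracked, s.count y = s'.count y + 1 ∧
      ∀ a ∈ s.tracked ∩ s'.tracked, a ≠ y → s.count a = s'.count a) ∧
    s.count z = s'.count z' ∧
    (∀ a ∈ s.tracked, s.count z ≤ s.count a) ∧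
    (∀ a ∈ s'.tracked, s'.count z' ≤ s'.count a)

/-- State (S4): (a) `T ≠ T'` with `T \ T' = {z₁, z₂}` and `T' \ T = {z₁', z₂'}`;
(b) counters agree on `T ∩ T'`;
(c) `C[z₁] − 1 = C[z₂] = C'[z₁'] = C'[z₂'] = min_{a∈T} C[a] = min_{a∈T'} C'[a]`;
(d) among the minimum-count items of `T'`, the one with largest recency (the
eviction victim of the primed run) belongs to `W' = T' \ T`. -/
def StateS4 (s s' : SSState α) : Prop :=
  s.tracked ≠ s'.tracked ∧
  ∃ z₁ z₂ z₁' z₂' : α, z₁ ≠ z₂ ∧ z₁' ≠ z₂' ∧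
    s.tracked \ s'.tracked = {z₁, z₂} ∧ s'.tracked \ s.tracked = {z₁', z₂'} ∧
    (∀ a ∈ s.tracked ∩ s'.tracked, s.count a = s'.count a) ∧
    s.count z₁ = s.count z₂ + 1 ∧
    s.count z₂ = s'.count z₁' ∧ s'.count z₁' = s'.count z₂' ∧
    (∀ a ∈ s.tracked, s.count z₂ ≤ s.count a) ∧
    (∀ a ∈ s'.tracked, s'.count z₁' ≤ s'.count a) ∧
    (∃ w, ssEvict s' = some w ∧ w ∈ s'.tracked \ s.tracked)

end NeighborStates

variable {α : Type} [LinearOrder α]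

/-- The SpaceSaving state after processing the first `t` positions of the
stream `X` (capacity `k`, positions 1-indexed). -/
def ssNbState (k : ℕ) (X : List α) (t : ℕ) : SSState α :=
  ssRun k ((X.map some).take t)

/-- The SpaceSaving state after processing the first `t` positions of the
neighboring stream `X′`, which is `X` with the single update at (1-indexed)
position `i` removed, i.e. replaced by an empty update contributing nothing. -/
def ssNbState' (k : ℕ) (X : List α) (i t : ℕ) : SSState α :=
  ssRun k (((X.map some).set (i - 1) none).take t)

section MinSet

variable {α : Type} {s : SSState α}

lemma mem_ssMinSet {a : α} :
    a ∈ ssMinSet s ↔ a ∈ s.tracked ∧ ∀ b ∈ s.tracked, s.count a ≤ s.count b :=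
  Finset.mem_filter

lemma ssMinSet_nonempty (h : s.tracked.Nonempty) : (ssMinSet s).Nonempty := by
  obtain ⟨a, ha, hmin⟩ := s.tracked.exists_min_image s.count h
  exact ⟨a, mem_ssMinSet.2 ⟨ha, hmin⟩⟩

end MinSet

section Eviction

variable {s s' : SSState α} {y : α}

lemma ssEvict_eq_some_iff :
    ssEvict s = some y ↔ y ∈ ssMinSet s ∧
      ∀ b ∈ ssMinSet s, toLex (s.recency b, b) ≤ toLex (s.recency y, y) := by
  simp only [Prod.Lex.toLex_le_toLex]
  unfold ssEvict
  split_ifs with hne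
  · rw [Option.some.injEq, Finset.max'_eq_iff]
    grind
  · simp only [Finset.filter_nonempty_iff, not_exists, not_and] at hne
    grind

lemma exists_ssEvict_eq_some (h : s.tracked.Nonempty) : ∃ y, ssEvict s = some y := by
  obtain ⟨y, hy, hmax⟩ :=
    (ssMinSet s).exists_max_image (fun b => toLex (s.recency b, b)) (ssMinSet_nonempty h)
  exact ⟨y, ssEvict_eq_some_iff.2 ⟨hy, hmax⟩⟩

lemma ssEvict_eq_some_of_subset (hsub : ssMinSet s ⊆ ssMinSet s')
    (hτ : ∀ b ∈ ssMinSet s, s.recency b = s'.recency b) (hy : y ∈ ssMinSet s)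
    (h : ssEvict s' = some y) : ssEvict s = some y := by
  refine ssEvict_eq_some_iff.2 ⟨hy, fun b hb => ?_⟩
  rw [hτ b hb, hτ y hy]
  exact (ssEvict_eq_some_iff.1 h).2 b (hsub hb)

end Eviction

section Slot

variable {s : SSState α} {x y : α}

/-- The item whose counter the update `x` takes over in a full state: `x` itself if it is tracked,
the eviction victim otherwise. -/
def ssSlot (s : SSState α) (x : α) : Option α :=
  if x ∈ s.tracked then some x else ssEvict s

/-- The state in which `x` takes over the counter of `y`, incremented, at time `t`. The choice
`y = x` is allowed and describes the update of a tracked item. -/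
def SSState.replace (s : SSState α) (y x : α) (t : ℕ) : SSState α :=
  ⟨insert x (s.tracked.erase y),
    Function.update (Function.update s.count y 0) x (s.count y + 1),
    Function.update s.recency x t⟩

lemma SSState.replace_tracked (s : SSState α) (y x : α) (t : ℕ) :
    (s.replace y x t).tracked = insert x (s.tracked.erase y) :=
  rfl

lemma SSState.replace_count (s : SSState α) (y x : α) (t : ℕ) (a : α) :
    (s.replace y x t).count a =
      if a = x then s.count y + 1 else if a = y then 0 else s.count a := by
  simp only [SSState.replace, Function.update_apply]

lemma ssSlot_eq_some_iff :
    ssSlot s x = some y ↔ x ∈ s.tracked ∧ x = y ∨ x ∉ s.tracked ∧ ssEvict s = some y := by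
  unfold ssSlot
  split_ifs with hx <;> simp [hx]

lemma exists_ssSlot_eq_some (h : s.tracked.Nonempty) (x : α) : ∃ y, ssSlot s x = some y := by
  obtain ⟨v, hv⟩ := exists_ssEvict_eq_some h
  simp only [ssSlot_eq_some_iff]
  by_cases hx : x ∈ s.tracked
  · exact ⟨x, .inl ⟨hx, rfl⟩⟩
  · exact ⟨v, .inr ⟨hx, hv⟩⟩

lemma mem_ssMinSet_of_ssSlot_eq_some (hy : ssSlot s x = some y) (hne : x ≠ y) :
    y ∈ ssMinSet s := by
  obtain ⟨-, rfl⟩ | ⟨-, hv⟩ := ssSlot_eq_some_iff.1 hy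
  · exact absurd rfl hne
  · exact (ssEvict_eq_some_iff.1 hv).1

lemma mem_tracked_of_ssSlot_eq_some (hy : ssSlot s x = some y) : y ∈ s.tracked := by
  obtain ⟨hx, rfl⟩ | ⟨-, hv⟩ := ssSlot_eq_some_iff.1 hy
  · exact hx
  · exact (mem_ssMinSet.1 (ssEvict_eq_some_iff.1 hv).1).1

lemma ssStep_eq_replace {k : ℕ} (t : ℕ) (hk : k ≤ s.tracked.card) (hy : ssSlot s x = some y) :
    ssStep k t s (some x) = s.replace y x t := by
  obtain ⟨hx, rfl⟩ | ⟨hx, hv⟩ := ssSlot_eq_some_iff.1 hy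
  · simp [ssStep, SSState.replace, hx, Finset.insert_erase]
  · simp [ssStep, SSState.replace, hx, hk.not_gt, hv]

lemma eq_of_ssSlot_eq_some (hy : ssSlot s x = some y) (hx : x ∈ s.tracked) : x = y := by
  rwa [ssSlot, if_pos hx, Option.some.injEq] at hy

lemma card_replace_of_ssSlot_eq_some {t : ℕ} (hy : ssSlot s x = some y) :
    (s.replace y x t).tracked.card = s.tracked.card := by
  have hx : x ∉ s.tracked.erase y := by
    grind [ssSlot_eq_some_iff]
  rw [SSState.replace_tracked, Finset.card_insert_of_notMem hx,
    Finset.card_erase_add_one (mem_tracked_of_ssSlot_eq_some hy)]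

end Slot

section Coupling

variable {k t : ℕ} {s s' : SSState α} {x b : α}

lemma ssStep_of_ne (hb : b ≠ x) (h : b ∈ (ssStep k t s (some x)).tracked) :
    b ∈ s.tracked ∧ (ssStep k t s (some x)).count b = s.count b ∧
      (ssStep k t s (some x)).recency b = s.recency b := by
  simp only [ssStep] at h ⊢
  split_ifs at h ⊢
  · simp_all
  · simp_all
  · cases hv : ssEvict s <;> simp_all

lemma ssStep_recency_self (h : x ∈ (ssStep k t s (some x)).tracked) :
    (ssStep k t s (some x)).recency x = t := by
  simp only [ssStep] at h ⊢
  split_ifs at h ⊢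
  · simp
  · simp
  · cases hv : ssEvict s <;> simp_all

lemma ssStep_count_self (h : x ∈ s.tracked) :
    (ssStep k t s (some x)).count x = s.count x + 1 := by
  simp [ssStep, h]

lemma ssStep_tracked_subset : (ssStep k t s (some x)).tracked ⊆ insert x s.tracked := by
  intro b hb
  rw [Finset.mem_insert, or_iff_not_imp_left]
  exact fun hne => (ssStep_of_ne hne hb).1

lemma ssStep_tracked_of_card_lt (h : (ssStep k t s (some x)).tracked.card < k) :
    (ssStep k t s (some x)).tracked = insert x s.tracked := by
  obtain hlt | hle := lt_or_ge s.tracked.card k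
  · by_cases hx : x ∈ s.tracked <;> simp [ssStep, hx, hlt]
  · have hne : s.tracked.Nonempty := Finset.card_pos.1 (by omega)
    obtain ⟨y, hy⟩ := exists_ssSlot_eq_some hne x
    rw [ssStep_eq_replace t hle hy, card_replace_of_ssSlot_eq_some hy] at h
    omega

/-- The relation that holds between the runs on neighboring streams from the removed position on,
whichever of the states (S1)–(S4) they are in; `k` is the capacity. -/
structure Coupled (k : ℕ) (s s' : SSState α) : Prop where
  subset_of_card_lt : s.tracked.card < k → s'.tracked ⊆ s.tracked
  recency_eq : ∀ b ∈ s.tracked, b ∈ s'.tracked → s.count b = s'.count b →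
    s.recency b = s'.recency b

lemma coupled_step_left (k t : ℕ) (s : SSState α) (x : α) :
    Coupled k (ssStep k t s (some x)) s where
  subset_of_card_lt hlt := by
    rw [ssStep_tracked_of_card_lt hlt]
    exact Finset.subset_insert x _
  recency_eq b hb hb' hc := by
    obtain rfl | hne := eq_or_ne b x
    · rw [ssStep_count_self hb'] at hc
      omega
    · exact (ssStep_of_ne hne hb).2.2

lemma Coupled.step (h : Coupled k s s') (t : ℕ) (x : α) :
    Coupled k (ssStep k t s (some x)) (ssStep k t s' (some x)) where
  subset_of_card_lt hlt := by
    have hT := ssStep_tracked_of_card_lt hlt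
    have hcard : s.tracked.card < k :=
      (Finset.card_le_card (hT ▸ Finset.subset_insert x _)).trans_lt hlt
    rw [hT]
    exact ssStep_tracked_subset.trans (Finset.insert_subset_insert x (h.subset_of_card_lt hcard))
  recency_eq b hb hb' hc := by
    obtain rfl | hne := eq_or_ne b x
    · rw [ssStep_recency_self hb, ssStep_recency_self hb']
    · obtain ⟨hT, hcount, hrec⟩ := ssStep_of_ne hne hb
      obtain ⟨hT', hcount', hrec'⟩ := ssStep_of_ne hne hb'
      rw [hrec, hrec']
      exact h.recency_eq b hT hT' (by rw [← hcount, ← hcount', hc])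

end Coupling

section Runs

lemma ssRunAux_concat (k : ℕ) (s : SSState α) (t : ℕ) (L : List (Option α)) (o : Option α) :
    ssRunAux k s t (L ++ [o]) = ssStep k (t + L.length) (ssRunAux k s t L) o := by
  induction L generalizing s t with
  | nil => rfl
  | cons a L ih =>
    rw [List.cons_append, ssRunAux, ssRunAux, ih, List.length_cons, add_right_comm, add_assoc]

lemma ssRun_take_succ (k : ℕ) {L : List (Option α)} {t : ℕ} (ht : t < L.length) :
    ssRun k (L.take (t + 1)) = ssStep k (t + 1) (ssRun k (L.take t)) L[t] := by
  rw [← List.take_concat_get' L t ht, ssRun, ssRunAux_concat, List.length_take,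
    min_eq_left ht.le, add_comm 1 t, ssRun]

lemma ssNbState_succ (k : ℕ) {X : List α} {t : ℕ} (ht : t < X.length) :
    ssNbState k X (t + 1) = ssStep k (t + 1) (ssNbState k X t) (some X[t]) := by
  rw [ssNbState, ssRun_take_succ k (by simpa using ht), List.getElem_map, ssNbState]

lemma ssNbState'_succ (k : ℕ) {X : List α} {i t : ℕ} (hi : 1 ≤ i) (hit : i ≤ t)
    (ht : t < X.length) :
    ssNbState' k X i (t + 1) = ssStep k (t + 1) (ssNbState' k X i t) (some X[t]) := by
  rw [ssNbState', ssRun_take_succ k (by simpa using ht), List.getElem_set_ne (by omega),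
    List.getElem_map, ssNbState']

lemma ssNbState'_self (k : ℕ) {X : List α} {j : ℕ} (hj : j < X.length) :
    ssNbState' k X (j + 1) (j + 1) = ssNbState k X j := by
  rw [ssNbState', ssRun_take_succ k (by simpa using hj)]
  simp only [add_tsub_cancel_right, List.getElem_set_self, List.take_set_of_le le_rfl, ssStep,
    ssNbState]

lemma coupled_ssNbState (k : ℕ) {X : List α} {i t : ℕ} (hi : 1 ≤ i) (hit : i ≤ t)
    (ht : t ≤ X.length) : Coupled k (ssNbState k X t) (ssNbState' k X i t) := by
  induction t, hit using Nat.le_induction with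
  | base =>
    obtain ⟨j, rfl⟩ := Nat.exists_eq_add_of_le' hi
    rw [ssNbState_succ k ht, ssNbState'_self k ht]
    exact coupled_step_left k (j + 1) (ssNbState k X j) X[j]
  | succ t hit ih =>
    rw [ssNbState_succ k ht, ssNbState'_succ k hi hit ht]
    exact (ih (by omega)).step (t + 1) X[t]

end Runs

/-- `T` and `T'` consist of a common part `I` and one further item each, `z` and `z'`. This is how
the tracked sets are related in (S2) and (S3). -/
structure DifferBySwap {β : Type*} [DecidableEq β] (I T T' : Finset β) (z z' : β) : Prop where
  left_eq : T = insert z I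
  right_eq : T' = insert z' I
  left_notMem : z ∉ I
  right_notMem : z' ∉ I
  ne : z ≠ z'

namespace DifferBySwap

variable {β : Type*} [DecidableEq β] {I T T' : Finset β} {z z' : β}

lemma left_mem (h : DifferBySwap I T T' z z') : z ∈ T :=
  h.left_eq ▸ Finset.mem_insert_self z I

lemma right_mem (h : DifferBySwap I T T' z z') : z' ∈ T' :=
  h.right_eq ▸ Finset.mem_insert_self z' I

lemma subset_left (h : DifferBySwap I T T' z z') : I ⊆ T :=
  h.left_eq ▸ Finset.subset_insert z I

lemma subset_right (h : DifferBySwap I T T' z z') : I ⊆ T' :=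
  h.right_eq ▸ Finset.subset_insert z' I

lemma right_notMem_left (h : DifferBySwap I T T' z z') : z' ∉ T := by
  rw [h.left_eq, Finset.mem_insert, not_or]
  exact ⟨h.ne.symm, h.right_notMem⟩

lemma sets_ne (h : DifferBySwap I T T' z z') : T ≠ T' :=
  fun heq => h.right_notMem_left (heq ▸ h.right_mem)

lemma card_eq (h : DifferBySwap I T T' z z') : T.card = T'.card := by
  rw [h.left_eq, h.right_eq, Finset.card_insert_of_notMem h.left_notMem,
    Finset.card_insert_of_notMem h.right_notMem]

lemma iff_sdiff : DifferBySwap I T T' z z' ↔ T ∩ T' = I ∧ T \ T' = {z} ∧ T' \ T = {z'} := by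
  constructor
  · rintro ⟨rfl, rfl, hz, hz', hne⟩
    grind
  · rintro ⟨rfl, hz, hz'⟩
    simp only [Finset.ext_iff, Finset.mem_sdiff, Finset.mem_singleton] at hz hz'
    have hzT := (hz z).2 rfl
    have hzT' := (hz' z').2 rfl
    constructor <;> grind

end DifferBySwap

lemma DifferBySwap.stateS3 {s s' : SSState α} {I : Finset α} {y z z' : α}
    (h : DifferBySwap I s.tracked s'.tracked z z') (hy : y ∈ I)
    (hcount_y : s.count y = s'.count y + 1)
    (hcount : ∀ a ∈ I, a ≠ y → s.count a = s'.count a)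
    (hcount_z : s.count z = s'.count z') (hmin : ∀ a ∈ I, s'.count z' ≤ s'.count a) :
    StateS3 s s' := by
  obtain ⟨hI, hz, hz'⟩ := DifferBySwap.iff_sdiff.1 h
  have hle : ∀ a ∈ I, s'.count a ≤ s.count a := fun a ha => by
    obtain rfl | hne := eq_or_ne a y
    · omega
    · exact (hcount a ha hne).ge
  refine ⟨h.sets_ne, z, z', hz, hz', by rw [hI]; exact ⟨y, hy, hcount_y, hcount⟩, hcount_z, ?_, ?_⟩
  · rw [h.left_eq, Finset.forall_mem_insert]
    exact ⟨le_rfl, fun a ha => hcount_z.le.trans ((hmin a ha).trans (hle a ha))⟩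
  · rw [h.right_eq, Finset.forall_mem_insert]
    exact ⟨le_rfl, hmin⟩

/-- The data of (S2) over the common part `I = T ∩ T'`. The bound `C[z] ≤ min_{a ∈ T} C[a] + 1` is
left out because it follows from the other fields. -/
structure S2Swap (I : Finset α) (s s' : SSState α) (z z' : α) : Prop
    extends DifferBySwap I s.tracked s'.tracked z z' where
  count_eq : ∀ a ∈ I, s.count a = s'.count a
  count_left : s.count z = s'.count z' + 1
  count_right_le : ∀ a ∈ I, s'.count z' ≤ s'.count a

namespace S2Swap

variable {I : Finset α} {s s' : SSState α} {y z z' : α}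

lemma count_right_le_left (h : S2Swap I s s' z z') : ∀ a ∈ s.tracked, s'.count z' ≤ s.count a := by
  rw [h.left_eq, Finset.forall_mem_insert]
  exact ⟨by rw [h.count_left]; exact Nat.le_succ _,
    fun a ha => (h.count_right_le a ha).trans_eq (h.count_eq a ha).symm⟩

lemma count_right_le_right (h : S2Swap I s s' z z') :
    ∀ a ∈ s'.tracked, s'.count z' ≤ s'.count a := by
  rw [h.right_eq, Finset.forall_mem_insert]
  exact ⟨le_rfl, h.count_right_le⟩

lemma count_eq_of_mem_ssMinSet_right (h : S2Swap I s s' z z') (hy : y ∈ ssMinSet s') :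
    s'.count y = s'.count z' :=
  le_antisymm ((mem_ssMinSet.1 hy).2 z' h.right_mem)
    (h.count_right_le_right y (mem_ssMinSet.1 hy).1)

lemma count_eq_or_of_mem_ssMinSet_left (h : S2Swap I s s' z z') (hy : y ∈ ssMinSet s) :
    s.count y = s'.count z' ∨ s.count y = s'.count z' + 1 := by
  obtain ⟨hyT, hmin⟩ := mem_ssMinSet.1 hy
  have hle : s.count y ≤ s'.count z' + 1 := h.count_left ▸ hmin z h.left_mem
  have hge := h.count_right_le_left y hyT
  omega

end S2Swap

lemma stateS2_iff_exists_S2Swap {s s' : SSState α} :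
    StateS2 s s' ↔ ∃ I z z', S2Swap I s s' z z' := by
  constructor
  · rintro ⟨-, z, z', hz, hz', heq, hzz', hmin', -⟩
    exact ⟨_, z, z', DifferBySwap.iff_sdiff.2 ⟨rfl, hz, hz'⟩, heq, hzz',
      fun a ha => hmin' a (Finset.mem_inter.1 ha).2⟩
  · rintro ⟨I, z, z', h⟩
    obtain ⟨hI, hz, hz'⟩ := DifferBySwap.iff_sdiff.1 h.toDifferBySwap
    exact ⟨h.sets_ne, z, z', hz, hz', hI ▸ h.count_eq, h.count_left, h.count_right_le_right,
      fun a ha => h.count_left.trans_le (Nat.succ_le_succ (h.count_right_le_left a ha))⟩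

namespace S2Swap

variable {I : Finset α} {s s' : SSState α} {x y y' z z' : α}

lemma stateS1_replace_left_right (h : S2Swap I s s' z z') (x : α) (t : ℕ) :
    StateS1 (s.replace z x t) (s'.replace z' x t) := by
  obtain ⟨⟨hT, hT', hz, hz', _⟩, heq, hzz', -⟩ := h
  refine ⟨?_, x, ?_, ?_, ?_⟩ <;> grind [SSState.replace_tracked, SSState.replace_count]

lemma stateS2_replace_common_common (h : S2Swap I s s' z z') (hy : y ∈ I) (hxz : x ≠ z)
    (hxz' : x ≠ z') (t : ℕ) : StateS2 (s.replace y x t) (s'.replace y x t) := by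
  obtain ⟨⟨hT, hT', hz, hz', hne⟩, heq, hzz', hmin⟩ := h
  have hswap : DifferBySwap (insert x (I.erase y)) (s.replace y x t).tracked
      (s'.replace y x t).tracked z z' := by
    constructor <;> grind [SSState.replace_tracked]
  refine stateS2_iff_exists_S2Swap.2 ⟨_, z, z', hswap, ?_, ?_, ?_⟩ <;> grind [SSState.replace_count]

lemma stateS3_replace_left_common (h : S2Swap I s s' z z') (hy : y ∈ I)
    (hcount : s'.count y = s'.count z') (t : ℕ) :
    StateS3 (s.replace z z t) (s'.replace y z t) := by
  obtain ⟨⟨hT, hT', hz, hz', _⟩, heq, hzz', hmin⟩ := h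
  have hswap : DifferBySwap (insert z (I.erase y)) (s.replace z z t).tracked
      (s'.replace y z t).tracked y z' := by
    constructor <;> grind [SSState.replace_tracked]
  refine hswap.stateS3 (Finset.mem_insert_self z _) ?_ ?_ ?_ ?_ <;> grind [SSState.replace_count]

lemma differBySwap_replace_common_right (h : S2Swap I s s' z z') (hy : y ∈ I)
    (hx : x ∉ s.tracked) (t : ℕ) :
    DifferBySwap (insert x (I.erase y)) (s.replace y x t).tracked (s'.replace z' x t).tracked
      z y := by
  obtain ⟨⟨hT, hT', hz, hz', _⟩, -⟩ := h
  constructor <;> grind [SSState.replace_tracked]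

lemma stateS2_replace_common_right (h : S2Swap I s s' z z') (hy : y ∈ I) (hx : x ∉ s.tracked)
    (hcount : s.count y = s'.count z') (t : ℕ) :
    StateS2 (s.replace y x t) (s'.replace z' x t) := by
  have hswap := h.differBySwap_replace_common_right hy hx t
  obtain ⟨⟨hT, _, _, hz', _⟩, heq, hzz', hmin⟩ := h
  refine stateS2_iff_exists_S2Swap.2 ⟨_, z, y, hswap, ?_, ?_, ?_⟩ <;> grind [SSState.replace_count]

lemma stateS3_replace_common_right (h : S2Swap I s s' z z') (hy : y ∈ I) (hx : x ∉ s.tracked)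
    (hmin : y ∈ ssMinSet s) (hcount : s.count y = s'.count z' + 1) (t : ℕ) :
    StateS3 (s.replace y x t) (s'.replace z' x t) := by
  have hswap := h.differBySwap_replace_common_right hy hx t
  have hle := (mem_ssMinSet.1 hmin).2
  obtain ⟨⟨hT, _, hz, hz', _⟩, heq, hzz', -⟩ := h
  refine hswap.stateS3 (Finset.mem_insert_self x _) ?_ ?_ ?_ ?_ <;> grind [SSState.replace_count]

lemma ssEvict_eq_some_left (h : S2Swap I s s' z z') (hτ : ∀ b ∈ I, s.recency b = s'.recency b)
    (hy : ssEvict s' = some y) (hyI : y ∈ I) : ssEvict s = some y := by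
  have hcount_y : s.count y = s'.count z' :=
    (h.count_eq y hyI).trans (h.count_eq_of_mem_ssMinSet_right (ssEvict_eq_some_iff.1 hy).1)
  have hcount : ∀ b ∈ ssMinSet s, s.count b = s'.count z' := fun b hb =>
    le_antisymm (((mem_ssMinSet.1 hb).2 y (h.subset_left hyI)).trans_eq hcount_y)
      (h.count_right_le_left b (mem_ssMinSet.1 hb).1)
  have hmem : ∀ b ∈ ssMinSet s, b ∈ I := fun b hb => by
    have hbT := (mem_ssMinSet.1 hb).1
    rw [h.left_eq, Finset.mem_insert] at hbT
    refine hbT.resolve_left fun hbz => ?_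
    exact Nat.succ_ne_self _ (h.count_left.symm.trans (hbz ▸ hcount b hb))
  refine ssEvict_eq_some_of_subset (fun b hb => ?_) (fun b hb => hτ b (hmem b hb)) ?_ hy
  · refine mem_ssMinSet.2 ⟨h.subset_right (hmem b hb), ?_⟩
    rw [← h.count_eq b (hmem b hb), hcount b hb]
    exact h.count_right_le_right
  · refine mem_ssMinSet.2 ⟨h.subset_left hyI, ?_⟩
    rw [hcount_y]
    exact h.count_right_le_left

lemma ssSlot_eq_some_left (h : S2Swap I s s' z z') (hτ : ∀ b ∈ I, s.recency b = s'.recency b)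
    (hxz : x ≠ z) (hy : ssSlot s' x = some y) (hyI : y ∈ I) : ssSlot s x = some y := by
  obtain ⟨-, rfl⟩ | ⟨hxT', hv⟩ := ssSlot_eq_some_iff.1 hy
  · exact ssSlot_eq_some_iff.2 (.inl ⟨h.subset_left hyI, rfl⟩)
  · have hxT : x ∉ s.tracked := by
      rw [h.left_eq, Finset.mem_insert, not_or]
      exact ⟨hxz, fun hxI => hxT' (h.subset_right hxI)⟩
    exact ssSlot_eq_some_iff.2 (.inr ⟨hxT, h.ssEvict_eq_some_left hτ hv hyI⟩)

lemma stateS2_or_stateS3_replace_of_mem_common (h : S2Swap I s s' z z')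
    (hτ : ∀ b ∈ I, s.recency b = s'.recency b) (hy : ssSlot s x = some y)
    (hy' : ssSlot s' x = some y') (hyI' : y' ∈ I) (t : ℕ) :
    StateS2 (s.replace y x t) (s'.replace y' x t) ∨
    StateS3 (s.replace y x t) (s'.replace y' x t) := by
  obtain rfl | hxz := eq_or_ne x z
  · obtain rfl : x = y := eq_of_ssSlot_eq_some hy h.left_mem
    have hxy : x ≠ y' := fun hxy => h.left_notMem (hxy ▸ hyI')
    exact .inr (h.stateS3_replace_left_common hyI'
      (h.count_eq_of_mem_ssMinSet_right (mem_ssMinSet_of_ssSlot_eq_some hy' hxy)) t)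
  · have hxz' : x ≠ z' := by
      rintro rfl
      exact h.right_notMem (eq_of_ssSlot_eq_some hy' h.right_mem ▸ hyI')
    obtain rfl : y = y' :=
      Option.some_injective _ (hy.symm.trans (h.ssSlot_eq_some_left hτ hxz hy' hyI'))
    exact .inl (h.stateS2_replace_common_common hyI' hxz hxz' t)

lemma stateS2_or_stateS3_replace_common_right (h : S2Swap I s s' z z')
    (hy : ssSlot s x = some y) (hy' : ssSlot s' x = some z') (hyI : y ∈ I) (t : ℕ) :
    StateS2 (s.replace y x t) (s'.replace z' x t) ∨
    StateS3 (s.replace y x t) (s'.replace z' x t) := by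
  have hx : x ∉ s.tracked := fun hx => by
    obtain rfl := eq_of_ssSlot_eq_some hy hx
    exact h.right_notMem (eq_of_ssSlot_eq_some hy' (h.subset_right hyI) ▸ hyI)
  have hmin : y ∈ ssMinSet s :=
    mem_ssMinSet_of_ssSlot_eq_some hy fun hxy => hx (hxy ▸ h.subset_left hyI)
  obtain hcount | hcount := h.count_eq_or_of_mem_ssMinSet_left hmin
  · exact .inl (h.stateS2_replace_common_right hyI hx hcount t)
  · exact .inr (h.stateS3_replace_common_right hyI hx hmin hcount t)

end S2Swap

lemma StateS2.step {k : ℕ} {s s' : SSState α} (h : StateS2 s s') (hc : Coupled k s s') (t : ℕ)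
    (x : α) :
    StateS1 (ssStep k t s (some x)) (ssStep k t s' (some x)) ∨
    StateS2 (ssStep k t s (some x)) (ssStep k t s' (some x)) ∨
    StateS3 (ssStep k t s (some x)) (ssStep k t s' (some x)) := by
  obtain ⟨I, z, z', h⟩ := stateS2_iff_exists_S2Swap.1 h
  have hτ : ∀ b ∈ I, s.recency b = s'.recency b := fun b hb =>
    hc.recency_eq b (h.subset_left hb) (h.subset_right hb) (h.count_eq b hb)
  have hfull : k ≤ s.tracked.card :=
    not_lt.1 fun hlt => h.right_notMem_left (hc.subset_of_card_lt hlt h.right_mem)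
  obtain ⟨y, hy⟩ := exists_ssSlot_eq_some ⟨z, h.left_mem⟩ x
  obtain ⟨y', hy'⟩ := exists_ssSlot_eq_some ⟨z', h.right_mem⟩ x
  rw [ssStep_eq_replace t hfull hy, ssStep_eq_replace t (h.card_eq ▸ hfull) hy']
  have hyT := mem_tracked_of_ssSlot_eq_some hy
  have hyT' := mem_tracked_of_ssSlot_eq_some hy'
  rw [h.left_eq, Finset.mem_insert] at hyT
  rw [h.right_eq, Finset.mem_insert] at hyT'
  obtain rfl | hyI' := hyT'
  · obtain rfl | hyI := hyT
    · exact .inl (h.stateS1_replace_left_right x t)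
    · exact .inr (h.stateS2_or_stateS3_replace_common_right hy hy' hyI t)
  · exact .inr (h.stateS2_or_stateS3_replace_of_mem_common hτ hy hy' hyI' t)

/-- **State transition from (S2).**  If the pair of SpaceSaving states on neighboring streams is in state (S2) at time `t` (with `t ≥ i` and `t + 1 ≤ T`), then after processing the common update at position `t + 1` the pair is in state (S1), (S2), or (S3). -/
theorem ss_transition_S2 {α : Type} [LinearOrder α] (k : ℕ) (hk : 1 ≤ k)
    (X : List α) (i : ℕ) (hi1 : 1 ≤ i) (hi2 : i ≤ X.length)
    (t : ℕ) (ht1 : i ≤ t) (ht2 : t + 1 ≤ X.length)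
    (h : StateS2 (ssNbState k X t) (ssNbState' k X i t)) :
    StateS1 (ssNbState k X (t + 1)) (ssNbState' k X i (t + 1)) ∨
    StateS2 (ssNbState k X (t + 1)) (ssNbState' k X i (t + 1)) ∨
    StateS3 (ssNbState k X (t + 1)) (ssNbState' k X i (t + 1)) := by
  rw [ssNbState_succ k ht2, ssNbState'_succ k hi1 ht1 ht2]
  exact h.step (coupled_ssNbState k hi1 ht1 (Nat.le_of_succ_le ht2)) (t + 1) X[t]
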